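/- arXiv:2510.21503 — 3 statements merged into one kernel-verified Lean document; each statement's English description precedes it below -/
import Mathlib

section
/- Let X₁, …, X_d ∈ Matrix (Fin N) (Fin N) ℂ be linearly independent with Gram matrix Γ_{i j} := Tr(X_iᴴ * X_j) with respect to the Frobenius inner product, and let (e_k)_{k ∈ Fin d} be any family in the span S of {X₁, …, X_d} that is orthonormal for the Frobenius inner product and spans S. Then for every x ∈ Matrix (Fin N) (Fin N) ℂ: Σ_k e_k * x * e_kᴴ = Σ_{i,j} (Γ⁻¹)_{i j} • (X_i * x * X_jᴴ). -/
open Matrix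

/-!
Write `e k = ∑ i, C i k • X i`. Orthonormality of `e` reads `Cᴴ * Γ * C = 1`, and since `C` is
square this forces `Γ⁻¹ = C * Cᴴ`. On the other hand, `C * Cᴴ` is exactly the matrix of coefficients
that appears when `∑ k, B (e k) (e k)` is expanded for a map `B` that is linear in its first and
conjugate-linear in its second argument.
-/

theorem inv_eq_mul_of_mul_mul_eq_one {n R : Type*} [Fintype n] [DecidableEq n] [CommRing R]
    {A Γ B : Matrix n n R} (h : A * Γ * B = 1) : Γ⁻¹ = B * A := by
  refine inv_eq_right_inv ?_
  rw [← Matrix.mul_assoc, mul_eq_one_comm, ← Matrix.mul_assoc, h]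

section Sesquilinear

variable {ι κ R M P : Type*} [Fintype ι] [CommRing R] [StarRing R]
  [AddCommMonoid M] [Module R M] [AddCommMonoid P] [Module R P]

theorem gram_sum_smul (φ : M →ₗ⋆[R] M →ₗ[R] R) (X : ι → M) (C : Matrix ι κ R) :
    (of fun k l ↦ φ (∑ i, C i k • X i) (∑ j, C j l • X j)) =
      Cᴴ * (of fun i j ↦ φ (X i) (X j)) * C := by
  ext k l
  simp only [of_apply, map_sum, LinearMap.sum_apply, map_smul, LinearMap.map_smulₛₗ₂, mul_apply,
    conjTranspose_apply, starRingEnd_apply, smul_eq_mul, mul_comm]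

theorem sum_diagonal_sum_smul [Fintype κ] (B : M →ₗ[R] M →ₗ⋆[R] P) (X : ι → M) (C : Matrix ι κ R) :
    ∑ k, B (∑ i, C i k • X i) (∑ j, C j k • X j) =
      ∑ i, ∑ j, (C * Cᴴ) i j • B (X i) (X j) :=
  calc ∑ k, B (∑ i, C i k • X i) (∑ j, C j k • X j)
      = ∑ k, ∑ i, ∑ j, (C i k * star (C j k)) • B (X i) (X j) := by
        simp_rw [LinearMap.map_sum₂, map_sum, LinearMap.map_smul₂, LinearMap.map_smulₛₗ,
          starRingEnd_apply, smul_smul]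
    _ = ∑ i, ∑ j, ∑ k, (C i k * star (C j k)) • B (X i) (X j) := by
        rw [Finset.sum_comm]
        exact Finset.sum_congr rfl fun i _ ↦ Finset.sum_comm
    _ = ∑ i, ∑ j, (C * Cᴴ) i j • B (X i) (X j) := by
        simp only [mul_apply, conjTranspose_apply, Finset.sum_smul]

theorem stmt_6_general [DecidableEq ι] (φ : M →ₗ⋆[R] M →ₗ[R] R) (B : M →ₗ[R] M →ₗ⋆[R] P)
    (X e : ι → M) (Γ : Matrix ι ι R) (hΓ : ∀ i j, Γ i j = φ (X i) (X j))
    (he_mem : ∀ k, e k ∈ Submodule.span R (Set.range X))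
    (he_on : ∀ k l, φ (e k) (e l) = if k = l then 1 else 0) :
    ∑ k, B (e k) (e k) = ∑ i, ∑ j, Γ⁻¹ i j • B (X i) (X j) := by
  obtain ⟨C, hC⟩ : ∃ C : Matrix ι ι R, ∀ k, ∑ i, C i k • X i = e k := by
    choose c hc using fun k ↦ (Submodule.mem_span_range_iff_exists_fun R).1 (he_mem k)
    exact ⟨(of c)ᵀ, hc⟩
  have conjTranspose_mul_gram_mul : Cᴴ * Γ * C = 1 := by
    have gram_X : Γ = of fun i j ↦ φ (X i) (X j) := ext hΓ
    rw [gram_X, ← gram_sum_smul]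
    ext k l
    rw [of_apply, hC, hC, he_on, one_apply]
  rw [inv_eq_mul_of_mul_mul_eq_one conjTranspose_mul_gram_mul, ← sum_diagonal_sum_smul]
  simp only [hC]

end Sesquilinear

section MatrixForms

variable {m n R : Type*} [Fintype n] [CommRing R] [StarRing R]

/-- The Frobenius form `⟨a, b⟩ = Tr(aᴴ * b)` on rectangular matrices, conjugate-linear in its
first argument. -/
def frobeniusForm [Fintype m] : Matrix m n R →ₗ⋆[R] Matrix m n R →ₗ[R] R :=
  LinearMap.mk₂'ₛₗ (starRingEnd R) (RingHom.id R) (fun a b ↦ (aᴴ * b).trace)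
    (by simp [Matrix.add_mul]) (by simp [starRingEnd_apply])
    (by simp [Matrix.mul_add]) (by simp)

/-- The map `(a, b) ↦ a * x * bᴴ`, linear in `a` and conjugate-linear in `b`. Summing its values at
`(e k, e k)` over an orthonormal family `e` gives the quantum adjacency matrix evaluated at `x`. -/
def sandwich (x : Matrix n n R) : Matrix m n R →ₗ[R] Matrix m n R →ₗ⋆[R] Matrix m m R :=
  LinearMap.mk₂'ₛₗ (RingHom.id R) (starRingEnd R) (fun a b ↦ a * x * bᴴ)
    (by simp [Matrix.add_mul]) (by simp) (by simp [Matrix.mul_add]) (by simp [starRingEnd_apply])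

end MatrixForms

/-- For a linearly independent family `X` with Frobenius Gram matrix `Γ` and any
orthonormal spanning family `e` of the span of `X`, the quantum adjacency map
`x ↦ ∑ k, e k * x * (e k)ᴴ` is given by `∑ i j, (Γ⁻¹ i j) • (X i * x * (X j)ᴴ)`. -/
theorem stmt_6 {N d : ℕ} (X e : Fin d → Matrix (Fin N) (Fin N) ℂ)
    (hX : LinearIndependent ℂ X)
    (Γ : Matrix (Fin d) (Fin d) ℂ)
    (hΓ : ∀ i j, Γ i j = ((X i)ᴴ * X j).trace)
    (he_mem : ∀ k, e k ∈ Submodule.span ℂ (Set.range X))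
    (he_on : ∀ k l, ((e k)ᴴ * e l).trace = if k = l then 1 else 0)
    (he_span : Submodule.span ℂ (Set.range e) = Submodule.span ℂ (Set.range X)) :
    ∀ x : Matrix (Fin N) (Fin N) ℂ,
      ∑ k, e k * x * (e k)ᴴ = ∑ i, ∑ j, (Γ⁻¹ i j) • (X i * x * (X j)ᴴ) := by
  intro x
  exact stmt_6_general frobeniusForm (sandwich x) X e Γ hΓ he_mem he_on
end

section
/- Let S be a linear subspace of Matrix (Fin N) (Fin N) ℂ that is closed under conjugate transpose (x ∈ S → xᴴ ∈ S), and let (X_k)_{k ∈ Fin d} be a family in S orthonormal with respect to the Frobenius inner product and spanning S. Then for every x ∈ Matrix (Fin N) (Fin N) ℂ: Σ_k X_k * x * X_kᴴ = Σ_k X_kᴴ * x * X_k. Consequently the map A(x) := Σ_k X_k * x * X_kᴴ is self-adjoint with respect to the Frobenius inner product: Tr(A(x)ᴴ * y) = Tr(xᴴ * A(y)) for all x, y. -/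
open Matrix

/-! A family `Y` that is Frobenius-orthonormal and spans the same space as `X` gives the same map
`x ↦ ∑ k, X k * x * (X k)ᴴ`: expand `(X k)ᴴ` along `Yᴴ` and `Y l` along `X`, and note that both
expansions have the coefficients `Tr ((X k)ᴴ * Y l)`. For a space closed under conjugate transpose,
`Y = Xᴴ` is such a family, and replacing `X` by `Xᴴ` is also what taking the Frobenius adjoint of
the map does. -/

theorem span_range_star_eq {R M ι : Type*} [CommSemiring R] [StarRing R] [AddCommMonoid M]
    [StarAddMonoid M] [Module R M] [StarModule R M] {v : ι → M}
    (hv : ∀ i, star (v i) ∈ Submodule.span R (Set.range v)) :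
    Submodule.span R (Set.range fun i => star (v i)) = Submodule.span R (Set.range v) := by
  refine le_antisymm (Submodule.span_le.2 (Set.range_subset_iff.2 hv))
    (Submodule.span_le.2 (Set.range_subset_iff.2 fun i => ?_))
  have star_star_mem :=
    Submodule.apply_mem_span_image_of_mem_span (starLinearEquiv R (A := M)).toLinearMap (hv i)
  rw [← Set.range_comp] at star_star_mem
  simpa [Function.comp_def] using star_star_mem

section

variable {R m n ι κ : Type*} [CommSemiring R] [StarRing R] [Fintype n]

section KrausMap

variable [Fintype ι]

/-- The linear map with Kraus operators `X` (over `ℂ`, a completely positive map). When `X` is a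
Frobenius-orthonormal basis of a quantum graph, this is its quantum adjacency matrix. -/
def krausMap (X : ι → Matrix m n R) : Matrix n n R →ₗ[R] Matrix m m R where
  toFun x := ∑ k, X k * x * (X k)ᴴ
  map_add' x y := by simp only [Matrix.mul_add, Matrix.add_mul, Finset.sum_add_distrib]
  map_smul' c x := by
    simp only [Matrix.mul_smul, Matrix.smul_mul, Finset.smul_sum, RingHom.id_apply]

theorem krausMap_apply (X : ι → Matrix m n R) (x : Matrix n n R) :
    krausMap X x = ∑ k, X k * x * (X k)ᴴ :=
  rfl

theorem trace_conjTranspose_krausMap_mul [Fintype m] (X : ι → Matrix m n R) (x : Matrix n n R)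
    (y : Matrix m m R) :
    ((krausMap X x)ᴴ * y).trace = (xᴴ * krausMap (fun k => (X k)ᴴ) y).trace := by
  simp only [krausMap_apply, conjTranspose_sum, conjTranspose_mul, conjTranspose_conjTranspose,
    Matrix.sum_mul, Matrix.mul_sum, trace_sum]
  refine Finset.sum_congr rfl fun k _ => ?_
  calc (X k * (xᴴ * (X k)ᴴ) * y).trace
      = (X k * (xᴴ * (X k)ᴴ * y)).trace := by rw [Matrix.mul_assoc]
    _ = (xᴴ * (X k)ᴴ * y * X k).trace := trace_mul_comm _ _
    _ = (xᴴ * ((X k)ᴴ * y * X k)).trace := by simp only [Matrix.mul_assoc]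

end KrausMap

/-- Orthonormality for the Frobenius inner product `⟨a, b⟩ = Tr (aᴴ * b)`, stated with the trace so
that it makes sense for rectangular matrices over any commutative star-semiring. -/
def IsFrobeniusOrthonormal [Fintype m] [DecidableEq ι] (X : ι → Matrix m n R) : Prop :=
  ∀ k l, ((X k)ᴴ * X l).trace = if k = l then 1 else 0

namespace IsFrobeniusOrthonormal

variable [Fintype m] [DecidableEq ι]

theorem conjTranspose {X : ι → Matrix m n R} (hX : IsFrobeniusOrthonormal X) :
    IsFrobeniusOrthonormal fun k => (X k)ᴴ := fun k l => by
  rw [conjTranspose_conjTranspose, trace_mul_comm, hX l k]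
  simp only [eq_comm]

variable [Fintype ι]

theorem sum_trace_smul_eq_of_mem_span {X : ι → Matrix m n R} (hX : IsFrobeniusOrthonormal X)
    {y : Matrix m n R} (hy : y ∈ Submodule.span R (Set.range X)) :
    ∑ k, ((X k)ᴴ * y).trace • X k = y := by
  obtain ⟨c, rfl⟩ := (Submodule.mem_span_range_iff_exists_fun R).1 hy
  have trace_eq_coeff (k : ι) : ((X k)ᴴ * ∑ l, c l • X l).trace = c k := by
    simp [Matrix.mul_sum, trace_sum, hX k]
  simp only [trace_eq_coeff]

theorem sum_trace_smul_conjTranspose_eq_of_mem_span {X : ι → Matrix m n R}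
    (hX : IsFrobeniusOrthonormal X) {y : Matrix m n R}
    (hy : y ∈ Submodule.span R (Set.range X)) :
    ∑ k, (yᴴ * X k).trace • (X k)ᴴ = yᴴ := by
  conv_rhs => rw [← hX.sum_trace_smul_eq_of_mem_span hy]
  simp only [conjTranspose_sum, conjTranspose_smul, ← trace_conjTranspose, conjTranspose_mul,
    conjTranspose_conjTranspose]

theorem krausMap_eq_of_span_eq [Fintype κ] [DecidableEq κ] {X : ι → Matrix m n R}
    {Y : κ → Matrix m n R} (hX : IsFrobeniusOrthonormal X) (hY : IsFrobeniusOrthonormal Y)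
    (hspan : Submodule.span R (Set.range X) = Submodule.span R (Set.range Y)) :
    krausMap X = krausMap Y := by
  have hX_mem (k : ι) : X k ∈ Submodule.span R (Set.range Y) :=
    hspan ▸ Submodule.subset_span (Set.mem_range_self k)
  have hY_mem (l : κ) : Y l ∈ Submodule.span R (Set.range X) :=
    hspan ▸ Submodule.subset_span (Set.mem_range_self l)
  ext1 x
  calc ∑ k, X k * x * (X k)ᴴ
      = ∑ k, X k * x * ∑ l, ((X k)ᴴ * Y l).trace • (Y l)ᴴ := by
        simp only [hY.sum_trace_smul_conjTranspose_eq_of_mem_span (hX_mem _)]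
    _ = ∑ l, (∑ k, ((X k)ᴴ * Y l).trace • X k) * x * (Y l)ᴴ := by
        simp only [Matrix.mul_sum, Matrix.sum_mul, Matrix.mul_smul, Matrix.smul_mul]
        exact Finset.sum_comm
    _ = ∑ l, Y l * x * (Y l)ᴴ := by
        simp only [hX.sum_trace_smul_eq_of_mem_span (hY_mem _)]

theorem krausMap_conjTranspose {X : ι → Matrix n n R} (hX : IsFrobeniusOrthonormal X)
    (hstar : ∀ k, (X k)ᴴ ∈ Submodule.span R (Set.range X)) :
    krausMap (fun k => (X k)ᴴ) = krausMap X :=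
  hX.conjTranspose.krausMap_eq_of_span_eq hX (span_range_star_eq hstar)

end IsFrobeniusOrthonormal

theorem stmt_10_general [Fintype ι] [DecidableEq ι] (X : ι → Matrix n n R)
    (hstar : ∀ k, (X k)ᴴ ∈ Submodule.span R (Set.range X))
    (hX : IsFrobeniusOrthonormal X) :
    (∀ x : Matrix n n R, ∑ k, X k * x * (X k)ᴴ = ∑ k, (X k)ᴴ * x * X k) ∧
    (∀ x y : Matrix n n R,
        ((∑ k, X k * x * (X k)ᴴ)ᴴ * y).trace = (xᴴ * ∑ k, X k * y * (X k)ᴴ).trace) := by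
  have krausMap_eq : krausMap (fun k => (X k)ᴴ) = krausMap X :=
    hX.krausMap_conjTranspose hstar
  constructor
  · intro x
    simpa only [krausMap_apply, conjTranspose_conjTranspose] using
      (LinearMap.congr_fun krausMap_eq x).symm
  · intro x y
    simpa only [krausMap_eq, krausMap_apply] using trace_conjTranspose_krausMap_mul X x y

end

/-- For a subspace `S ≤ Mₙ(ℂ)` closed under conjugate transpose and a
Frobenius-orthonormal spanning family `X` of `S`, the quantum adjacency map
`A(x) = ∑ k, X k * x * (X k)ᴴ` equals `x ↦ ∑ k, (X k)ᴴ * x * X k`, and is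
self-adjoint for the Frobenius inner product. -/
theorem stmt_10 {N d : ℕ} (S : Submodule ℂ (Matrix (Fin N) (Fin N) ℂ))
    (hS : ∀ x ∈ S, xᴴ ∈ S)
    (X : Fin d → Matrix (Fin N) (Fin N) ℂ)
    (hmem : ∀ k, X k ∈ S)
    (hon : ∀ k l, ((X k)ᴴ * X l).trace = if k = l then 1 else 0)
    (hspan : Submodule.span ℂ (Set.range X) = S) :
    (∀ x : Matrix (Fin N) (Fin N) ℂ,
        ∑ k, X k * x * (X k)ᴴ = ∑ k, (X k)ᴴ * x * X k) ∧
    (∀ x y : Matrix (Fin N) (Fin N) ℂ,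
        ((∑ k, X k * x * (X k)ᴴ)ᴴ * y).trace =
          (xᴴ * ∑ k, X k * y * (X k)ᴴ).trace) :=
  stmt_10_general X (fun k => hspan ▸ hS _ (hmem k)) hon
end

section
/- Let S be a linear subspace of Matrix (Fin n) (Fin n) ℂ containing the identity matrix 1 and closed under conjugate transpose. Define the reflexive complement S^⊥ := ℂ•1 ⊔ ((S ⊓ {1}ᗮ)ᗮ ⊓ {1}ᗮ), where ᗮ denotes orthogonal complement with respect to the Frobenius inner product and ⊔, ⊓ denote sum and intersection of subspaces. Then: (i) 1 ∈ S^⊥; (ii) S^⊥ is closed under conjugate transpose; (iii) dim S^⊥ = n² − dim S + 1; (iv) (S^⊥)^⊥ = S. -/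
open Matrix

/-- The orthogonal complement of a subspace of `Mₙ(ℂ)` with respect to the Frobenius
inner product `⟨a, b⟩ = Tr(aᴴ * b)`. -/
noncomputable def frobPerp {n : ℕ} (S : Submodule ℂ (Matrix (Fin n) (Fin n) ℂ)) :
    Submodule ℂ (Matrix (Fin n) (Fin n) ℂ) :=
  ⨅ b ∈ (S : Set (Matrix (Fin n) (Fin n) ℂ)),
    LinearMap.ker ((Matrix.traceLinearMap (Fin n) ℂ ℂ) ∘ₗ (LinearMap.mulLeft ℂ bᴴ))

/-- The reflexive complement of an operator system `S ≤ Mₙ(ℂ)`: take the traceless part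
of `S`, then the orthogonal complement inside the traceless matrices, then add the unit. -/
noncomputable def reflCompl {n : ℕ} (S : Submodule ℂ (Matrix (Fin n) (Fin n) ℂ)) :
    Submodule ℂ (Matrix (Fin n) (Fin n) ℂ) :=
  Submodule.span ℂ {(1 : Matrix (Fin n) (Fin n) ℂ)} ⊔
    (frobPerp (S ⊓ frobPerp (Submodule.span ℂ {(1 : Matrix (Fin n) (Fin n) ℂ)})) ⊓
      frobPerp (Submodule.span ℂ {(1 : Matrix (Fin n) (Fin n) ℂ)}))

/-!
If `1 ∈ S`, then the part of `(S ⊓ {1}ᗮ)ᗮ` orthogonal to `1` is just `Sᗮ`, so the reflexive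
complement is the orthogonal direct sum `ℂ ∙ 1 ⊔ Sᗮ`. Its dimension can be read off, and applying
the formula twice gives `ℂ ∙ 1 ⊔ ({1}ᗮ ⊓ S) = S`.
-/

section InnerProductSpace

variable {𝕜 E : Type*} [RCLike 𝕜] [NormedAddCommGroup E] [InnerProductSpace 𝕜 E]
  {U S : Submodule 𝕜 E}

lemma orthogonal_inf_orthogonal_inf_orthogonal [U.HasOrthogonalProjection] (hUS : U ≤ S) :
    (S ⊓ Uᗮ)ᗮ ⊓ Uᗮ = Sᗮ := by
  rw [Submodule.inf_orthogonal, sup_comm, inf_comm,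
    Submodule.sup_orthogonal_inf_of_hasOrthogonalProjection hUS]

lemma sup_orthogonal_sup_orthogonal [U.HasOrthogonalProjection] [S.HasOrthogonalProjection]
    (hUS : U ≤ S) : U ⊔ (U ⊔ Sᗮ)ᗮ = S := by
  rw [← Submodule.inf_orthogonal, Submodule.orthogonal_orthogonal,
    Submodule.sup_orthogonal_inf_of_hasOrthogonalProjection hUS]

lemma finrank_sup_orthogonal_add_finrank [FiniteDimensional 𝕜 E] (hUS : U ≤ S) :
    Module.finrank 𝕜 ↥(U ⊔ Sᗮ) + Module.finrank 𝕜 S =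
      Module.finrank 𝕜 U + Module.finrank 𝕜 E := by
  have hdisj : U ⊓ Sᗮ = ⊥ := (S.orthogonal_disjoint.mono_left hUS).eq_bot
  have hsup := Submodule.finrank_sup_add_finrank_inf_eq U Sᗮ
  rw [hdisj, finrank_bot, add_zero] at hsup
  rw [hsup, add_assoc, add_comm (Module.finrank 𝕜 Sᗮ), S.finrank_add_finrank_orthogonal]

end InnerProductSpace

lemma star_mem_sup {R M : Type*} [Semiring R] [AddCommMonoid M] [StarAddMonoid M] [Module R M]
    {S T : Submodule R M} (hS : ∀ x ∈ S, star x ∈ S) (hT : ∀ x ∈ T, star x ∈ T) :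
    ∀ x ∈ S ⊔ T, star x ∈ S ⊔ T := by
  intro x hx
  obtain ⟨s, hs, t, ht, rfl⟩ := Submodule.mem_sup.1 hx
  rw [star_add]
  exact Submodule.add_mem_sup (hS s hs) (hT t ht)

lemma star_mem_inf {R M : Type*} [Semiring R] [AddCommMonoid M] [Star M] [Module R M]
    {S T : Submodule R M} (hS : ∀ x ∈ S, star x ∈ S) (hT : ∀ x ∈ T, star x ∈ T) :
    ∀ x ∈ S ⊓ T, star x ∈ S ⊓ T :=
  fun x hx ↦ ⟨hS x hx.1, hT x hx.2⟩

lemma star_mem_span_singleton {R M : Type*} [Semiring R] [Star R] [AddCommMonoid M] [Star M]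
    [Module R M] [StarModule R M] {a : M} (ha : IsSelfAdjoint a) : ∀ x ∈ R ∙ a, star x ∈ R ∙ a := by
  intro x hx
  obtain ⟨c, rfl⟩ := Submodule.mem_span_singleton.1 hx
  rw [star_smul, ha.star_eq]
  exact Submodule.smul_mem _ _ (Submodule.mem_span_singleton_self a)

section Frobenius

variable {m 𝕜 : Type*} [Fintype m] [DecidableEq m] [RCLike 𝕜]

open scoped ComplexOrder in
/-- The norm underlying `frobeniusInnerProductSpace`. Mathlib's
`Matrix.frobeniusNormedAddCommGroup` carries no inner product, so it is not used here. -/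
noncomputable local instance frobeniusInnerNormedAddCommGroup :
    NormedAddCommGroup (Matrix m m 𝕜) :=
  toMatrixNormedAddCommGroup 1 PosDef.one

open scoped ComplexOrder in
/-- The Frobenius inner product on square matrices, obtained as the inner product
`⟪a, b⟫ = Tr(b * M * aᴴ)` of Mathlib for `M = 1`. -/
noncomputable local instance frobeniusInnerProductSpace : InnerProductSpace 𝕜 (Matrix m m 𝕜) :=
  toMatrixInnerProductSpace 1 PosSemidef.one

lemma frobenius_inner_eq_trace (a b : Matrix m m 𝕜) : inner 𝕜 a b = (aᴴ * b).trace := by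
  change (b * 1 * aᴴ).trace = (aᴴ * b).trace
  rw [mul_one, trace_mul_comm]

lemma conjTranspose_mem_orthogonal {S : Submodule 𝕜 (Matrix m m 𝕜)} (hS : ∀ x ∈ S, xᴴ ∈ S) :
    ∀ x ∈ Sᗮ, xᴴ ∈ Sᗮ := by
  intro x hx b hb
  have hbx : (b * x).trace = 0 := by
    simpa only [frobenius_inner_eq_trace, conjTranspose_conjTranspose] using hx bᴴ (hS b hb)
  rw [frobenius_inner_eq_trace, ← conjTranspose_mul, trace_conjTranspose, trace_mul_comm, hbx,
    star_zero]

variable {n : ℕ} {S : Submodule ℂ (Matrix (Fin n) (Fin n) ℂ)}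

lemma frobPerp_eq_orthogonal (S : Submodule ℂ (Matrix (Fin n) (Fin n) ℂ)) : frobPerp S = Sᗮ := by
  ext x
  simp [frobPerp, Submodule.mem_orthogonal, frobenius_inner_eq_trace]

lemma reflCompl_eq_span_one_sup_orthogonal (h1 : 1 ∈ S) : reflCompl S = (ℂ ∙ 1) ⊔ Sᗮ := by
  simp only [reflCompl, frobPerp_eq_orthogonal]
  rw [orthogonal_inf_orthogonal_inf_orthogonal ((Submodule.span_singleton_le_iff_mem _ _).2 h1)]

lemma one_mem_reflCompl (S : Submodule ℂ (Matrix (Fin n) (Fin n) ℂ)) : 1 ∈ reflCompl S :=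
  Submodule.mem_sup_left (Submodule.mem_span_singleton_self 1)

lemma conjTranspose_mem_reflCompl (hS : ∀ x ∈ S, xᴴ ∈ S) :
    ∀ x ∈ reflCompl S, xᴴ ∈ reflCompl S := by
  have hone : ∀ x ∈ ℂ ∙ (1 : Matrix (Fin n) (Fin n) ℂ), xᴴ ∈ ℂ ∙ (1 : Matrix (Fin n) (Fin n) ℂ) :=
    star_mem_span_singleton (.one _)
  have htraceless := conjTranspose_mem_orthogonal hone
  simp only [reflCompl, frobPerp_eq_orthogonal]
  exact star_mem_sup hone
    (star_mem_inf (conjTranspose_mem_orthogonal (star_mem_inf hS htraceless)) htraceless)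

lemma finrank_reflCompl_add_finrank [NeZero n] (h1 : 1 ∈ S) :
    Module.finrank ℂ (reflCompl S) + Module.finrank ℂ S = n ^ 2 + 1 := by
  rw [reflCompl_eq_span_one_sup_orthogonal h1,
    finrank_sup_orthogonal_add_finrank ((Submodule.span_singleton_le_iff_mem _ _).2 h1),
    finrank_span_singleton one_ne_zero, Module.finrank_matrix, Module.finrank_self,
    Fintype.card_fin, mul_one, sq, add_comm]

lemma reflCompl_reflCompl (h1 : 1 ∈ S) : reflCompl (reflCompl S) = S := by
  rw [reflCompl_eq_span_one_sup_orthogonal (one_mem_reflCompl S),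
    reflCompl_eq_span_one_sup_orthogonal h1,
    sup_orthogonal_sup_orthogonal ((Submodule.span_singleton_le_iff_mem _ _).2 h1)]

end Frobenius

/-- The reflexive complement of an operator system is again an operator system, has
dimension `n² − dim S + 1`, and taking it twice recovers `S`. -/
theorem stmt_13 {n : ℕ} (hn : 0 < n) (S : Submodule ℂ (Matrix (Fin n) (Fin n) ℂ))
    (h1 : (1 : Matrix (Fin n) (Fin n) ℂ) ∈ S)
    (hsa : ∀ x ∈ S, xᴴ ∈ S) :
    (1 : Matrix (Fin n) (Fin n) ℂ) ∈ reflCompl S ∧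
    (∀ x ∈ reflCompl S, xᴴ ∈ reflCompl S) ∧
    Module.finrank ℂ (reflCompl S) = n ^ 2 - Module.finrank ℂ S + 1 ∧
    reflCompl (reflCompl S) = S := by
  have : NeZero n := ⟨hn.ne'⟩
  have hdim := finrank_reflCompl_add_finrank h1
  have hle : Module.finrank ℂ S ≤ n ^ 2 := by
    simpa [Module.finrank_matrix, sq] using S.finrank_le
  exact ⟨one_mem_reflCompl S, conjTranspose_mem_reflCompl hsa, by lia, reflCompl_reflCompl h1⟩
end
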